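/- Let p be a prime number and let D = p or D = 2p, with D not a perfect square. If T_D = 2L for some positive integer L, then Q_L = 2, P_L = a_L, a_L is an element of {⌊√D⌋ − 1, ⌊√D⌋}, and a_L ≡ D (mod 2). -/

import Mathlib

/-- The sequence of complete quotients of the continued fraction of `x`:
`α₀ = x`, `α_{k+1} = 1/(αₖ - ⌊αₖ⌋)`. -/
noncomputable def cfAlpha (x : ℝ) : ℕ → ℝ
  | 0 => x
  | k + 1 => 1 / (cfAlpha x k - (⌊cfAlpha x k⌋ : ℝ))

/-- The partial quotients of the continued fraction of `x`: `aₖ = ⌊αₖ⌋`. -/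
noncomputable def cfA (x : ℝ) (k : ℕ) : ℤ :=
  ⌊cfAlpha x k⌋

/-- The length of the minimal period of the continued fraction of `x`:
the least `l > 0` with `a_{k+l} = a_k` for all `k ≥ 1`. -/
noncomputable def cfPeriod (x : ℝ) : ℕ :=
  sInf {l : ℕ | 0 < l ∧ ∀ k : ℕ, 1 ≤ k → cfA x (k + l) = cfA x k}

/-- The integer sequences `(Pₖ, Qₖ)` attached to the continued fraction of `√D`:
`P₀ = 0`, `Q₀ = 1`, `P_{k+1} = aₖ·Qₖ − Pₖ`, `Q_{k+1} = (D − P_{k+1}²)/Qₖ`. -/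
noncomputable def cfPQ (D : ℕ) : ℕ → ℤ × ℤ
  | 0 => (0, 1)
  | k + 1 =>
    ((cfA (Real.sqrt D) k) * (cfPQ D k).2 - (cfPQ D k).1,
      ((D : ℤ) - ((cfA (Real.sqrt D) k) * (cfPQ D k).2 - (cfPQ D k).1) ^ 2) / (cfPQ D k).2)

/-! A complete quotient `αₗ` differs from `√D` by an integer exactly when `Qₗ = 1`, so the period of
`√D` is the least `l > 0` with `Qₗ = 1`. From such an index the sequence `(Pₖ, Qₖ)` can be read
backwards: for `k ≥ 1` both `Pₖ` and `P_{k+1}` lie in the window `(⌊√D⌋ - Qₖ, ⌊√D⌋]`, so either is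
determined by its class modulo `Qₖ`, and these classes are opposite. Hence a period `2L` is
palindromic and `P_{L+1} = P_L`, i.e. `a_L Q_L = 2 P_L`. As `Q_L` also divides `D - P_L²`, it
divides `2 gcd(P_L, D)`, which for `D ∈ {p, 2p}` leaves only `Q_L ∈ {1, 2, 4}`; minimality of the
period excludes `1`, and `4 ∤ D` excludes `4`. -/

section CompleteQuotients

variable {x y : ℝ}

lemma cfAlpha_succ (x : ℝ) (k : ℕ) : cfAlpha x (k + 1) = (Int.fract (cfAlpha x k))⁻¹ :=
  one_div _

lemma cfAlpha_add (x : ℝ) (m n : ℕ) : cfAlpha x (m + n) = cfAlpha (cfAlpha x m) n := by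
  induction n with
  | zero => rfl
  | succ n ih => rw [← add_assoc, cfAlpha_succ, cfAlpha_succ, ih]

lemma cfA_add (x : ℝ) (m n : ℕ) : cfA x (m + n) = cfA (cfAlpha x m) n :=
  congrArg Int.floor (cfAlpha_add x m n)

lemma convergent_eq_of_cfA_eq (h : cfA x = cfA y) (n : ℕ) : x.convergent n = y.convergent n := by
  induction n generalizing x y with
  | zero => exact congrArg Int.cast (congrFun h 0)
  | succ n ih =>
    have hfloor : ⌊x⌋ = ⌊y⌋ := congrFun h 0
    have htail : cfA (Int.fract x)⁻¹ = cfA (Int.fract y)⁻¹ := by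
      funext k
      have hk := congrFun h (1 + k)
      rwa [cfA_add, cfA_add, cfAlpha_succ, cfAlpha_succ] at hk
    rw [Real.convergent_succ, Real.convergent_succ, hfloor, ih htail]

lemma cfA_injective : Function.Injective cfA := fun x y h ↦ by
  have hconvs : (GenContFract.of x).convs = (GenContFract.of y).convs := by
    funext n
    rw [Real.convs_eq_convergent, Real.convs_eq_convergent, convergent_eq_of_cfA_eq h]
  exact tendsto_nhds_unique (GenContFract.of_convergence x)
    (hconvs ▸ GenContFract.of_convergence y)

lemma cfA_periodic_iff {l : ℕ} :
    (∀ k, 1 ≤ k → cfA x (k + l) = cfA x k) ↔ cfAlpha x (l + 1) = cfAlpha x 1 := by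
  constructor
  · intro h
    refine cfA_injective (funext fun n ↦ ?_)
    rw [← cfA_add, ← cfA_add, ← h (1 + n) (Nat.le_add_right 1 n)]
    congr 1
    ring
  · intro h k hk
    obtain ⟨n, rfl⟩ := Nat.exists_eq_add_of_le hk
    rw [add_comm, ← add_assoc, cfA_add, h, ← cfA_add]

lemma irrational_cfAlpha (hx : Irrational x) (k : ℕ) : Irrational (cfAlpha x k) := by
  induction k with
  | zero => exact hx
  | succ k ih => exact cfAlpha_succ x k ▸ (ih.sub_intCast _).inv

lemma fract_cfAlpha_pos (hx : Irrational x) (k : ℕ) : 0 < Int.fract (cfAlpha x k) :=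
  Int.fract_pos.mpr ((irrational_cfAlpha hx k).ne_int _)

lemma one_le_cfA_succ (hx : Irrational x) (k : ℕ) : 1 ≤ cfA x (k + 1) := by
  rw [cfA, Int.le_floor, Int.cast_one, cfAlpha_succ]
  exact (one_le_inv₀ (fract_cfAlpha_pos hx k)).mpr (Int.fract_lt_one _).le

end CompleteQuotients

lemma eq_of_modEq_of_mem_Ioc {q r a b : ℤ} (ha : a ∈ Set.Ioc (r - q) r)
    (hb : b ∈ Set.Ioc (r - q) r) (h : a ≡ b [ZMOD q]) : a = b := by
  have habs : |b - a| < q := by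
    rw [abs_lt]
    constructor <;> linarith [ha.1, ha.2, hb.1, hb.2]
  exact (sub_eq_zero.mp (Int.eq_zero_of_abs_lt_dvd h.dvd habs)).symm

lemma mem_Ioc_floor_sub {s : ℝ} {q m : ℤ} (hlt : s - q < m) (hle : m ≤ s) :
    m ∈ Set.Ioc (⌊s⌋ - q) ⌊s⌋ := by
  refine ⟨?_, Int.le_floor.mpr hle⟩
  rw [sub_lt_iff_lt_add, Int.floor_lt, Int.cast_add]
  exact sub_lt_iff_lt_add.mp hlt

/-- The numerator `Pₖ` of the complete quotient `αₖ = (√D + Pₖ) / Qₖ`. -/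
noncomputable abbrev cfP (D k : ℕ) : ℤ := (cfPQ D k).1

/-- The denominator `Qₖ` of the complete quotient `αₖ = (√D + Pₖ) / Qₖ`. -/
noncomputable abbrev cfQ (D k : ℕ) : ℤ := (cfPQ D k).2

section Sqrt

variable {D : ℕ}

lemma cfP_succ_add (k : ℕ) : cfP D (k + 1) + cfP D k = cfA √D k * cfQ D k :=
  sub_add_cancel _ _

lemma cfQ_dvd_cfP_succ_add (k : ℕ) : cfQ D k ∣ cfP D (k + 1) + cfP D k :=
  cfP_succ_add k ▸ dvd_mul_left _ _

lemma cfQ_dvd_sub_cfP_succ_sq {k : ℕ} (h : cfQ D k ∣ D - cfP D k ^ 2) :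
    cfQ D k ∣ D - cfP D (k + 1) ^ 2 := by
  have hsub : (D - cfP D (k + 1) ^ 2 : ℤ) =
      (D - cfP D k ^ 2) - (cfP D (k + 1) + cfP D k) * (cfP D (k + 1) - cfP D k) := by ring
  exact hsub ▸ dvd_sub h ((cfQ_dvd_cfP_succ_add k).mul_right _)

lemma cfQ_dvd_sub_cfP_sq (k : ℕ) : cfQ D k ∣ D - cfP D k ^ 2 := by
  induction k with
  | zero => exact one_dvd _
  | succ k ih => exact Int.ediv_dvd_of_dvd (cfQ_dvd_sub_cfP_succ_sq ih)

lemma cfQ_succ_mul (k : ℕ) : cfQ D (k + 1) * cfQ D k = D - cfP D (k + 1) ^ 2 :=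
  Int.ediv_mul_cancel (cfQ_dvd_sub_cfP_succ_sq (cfQ_dvd_sub_cfP_sq k))

lemma cfQ_succ_mul_eq_sqrt_sub_mul_sqrt_add (k : ℕ) :
    (cfQ D (k + 1) * cfQ D k : ℝ) = (√D - cfP D (k + 1)) * (√D + cfP D (k + 1)) := by
  have hsq : √(D : ℝ) ^ 2 = D := Real.sq_sqrt D.cast_nonneg
  have hmul : (cfQ D (k + 1) * cfQ D k : ℝ) = D - cfP D (k + 1) ^ 2 := by
    exact_mod_cast cfQ_succ_mul k
  linear_combination hmul - hsq

lemma fract_cfAlpha_mul_cfQ {k : ℕ} (h : cfAlpha √D k * cfQ D k = √D + cfP D k) :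
    Int.fract (cfAlpha √D k) * cfQ D k = √D - cfP D (k + 1) := by
  have hadd : (cfP D (k + 1) + cfP D k : ℝ) = cfA √D k * cfQ D k := by exact_mod_cast cfP_succ_add k
  rw [Int.fract, ← cfA]
  linear_combination h + hadd

lemma cfAlpha_mul_cfQ (hD : ¬ IsSquare D) (k : ℕ) : cfAlpha √D k * cfQ D k = √D + cfP D k := by
  have hirr : Irrational √D := irrational_sqrt_natCast_iff.mpr hD
  induction k with
  | zero => simp [cfAlpha, cfP, cfQ, cfPQ]
  | succ k ih =>
    have hne : √D - cfP D (k + 1) ≠ 0 := sub_ne_zero.mpr (hirr.ne_int _)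
    refine mul_left_cancel₀ hne ?_
    calc (√D - cfP D (k + 1)) * (cfAlpha √D (k + 1) * cfQ D (k + 1))
        = Int.fract (cfAlpha √D k) * cfQ D k * ((Int.fract (cfAlpha √D k))⁻¹ * cfQ D (k + 1)) := by
          rw [fract_cfAlpha_mul_cfQ ih, cfAlpha_succ]
      _ = cfQ D (k + 1) * cfQ D k := by
          field_simp [(fract_cfAlpha_pos hirr k).ne']
      _ = (√D - cfP D (k + 1)) * (√D + cfP D (k + 1)) := cfQ_succ_mul_eq_sqrt_sub_mul_sqrt_add k

lemma cfAlpha_succ_eq_cfAlpha_one_iff (hD : ¬ IsSquare D) {l : ℕ} :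
    cfAlpha √D (l + 1) = cfAlpha √D 1 ↔ cfQ D l = 1 := by
  have hirr : Irrational √D := irrational_sqrt_natCast_iff.mpr hD
  have hα := cfAlpha_mul_cfQ hD l
  rw [cfAlpha_succ, cfAlpha_succ, inv_inj, Int.fract_eq_fract]
  constructor
  · rintro ⟨n, hn⟩
    by_contra hQ
    refine (hirr.mul_intCast (sub_ne_zero.mpr hQ)).ne_int (cfP D l - n * cfQ D l) ?_
    rw [sub_eq_iff_eq_add'.mp hn, cfAlpha] at hα
    push_cast
    linear_combination hα
  · intro hQ
    refine ⟨cfP D l, ?_⟩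
    rw [hQ, Int.cast_one, mul_one] at hα
    rw [hα, cfAlpha, add_sub_cancel_left]

theorem cfPeriod_sqrt (hD : ¬ IsSquare D) : cfPeriod √D = sInf {l | 0 < l ∧ cfQ D l = 1} := by
  simp only [cfPeriod, cfA_periodic_iff, cfAlpha_succ_eq_cfAlpha_one_iff hD]

lemma cfQ_cfPeriod (hD : ¬ IsSquare D) (h : 0 < cfPeriod √D) : cfQ D (cfPeriod √D) = 1 := by
  rw [cfPeriod_sqrt hD] at h ⊢
  exact (Nat.sInf_mem (Nat.nonempty_of_pos_sInf h)).2

lemma cfQ_ne_one_of_lt_cfPeriod (hD : ¬ IsSquare D) {l : ℕ} (hl : 0 < l)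
    (hlt : l < cfPeriod √D) : cfQ D l ≠ 1 := by
  rw [cfPeriod_sqrt hD] at hlt
  exact fun h ↦ Nat.notMem_of_lt_sInf hlt ⟨hl, h⟩

lemma pos_of_not_isSquare (hD : ¬ IsSquare D) : 0 < D :=
  Nat.pos_of_ne_zero fun h ↦ hD (h ▸ IsSquare.zero)

lemma one_le_cfA_sqrt (hD : ¬ IsSquare D) (k : ℕ) : 1 ≤ cfA √D k := by
  cases k with
  | zero =>
    rw [cfA, Int.le_floor, Int.cast_one, cfAlpha, Real.one_le_sqrt]
    exact_mod_cast pos_of_not_isSquare hD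
  | succ k => exact one_le_cfA_succ (irrational_sqrt_natCast_iff.mpr hD) k

lemma cfQ_lt_sqrt_add_cfP_succ (hD : ¬ IsSquare D) {k : ℕ} (hQ : 0 < cfQ D k) (hP : cfP D k < √D) :
    cfQ D k < √D + cfP D (k + 1) := by
  have hle : (cfQ D k : ℝ) ≤ cfP D (k + 1) + cfP D k := by
    rw [← Int.cast_add, cfP_succ_add]
    exact_mod_cast le_mul_of_one_le_left hQ.le (one_le_cfA_sqrt hD k)
  linarith

lemma cfQ_pos_and_cfP_lt_sqrt (hD : ¬ IsSquare D) (k : ℕ) : 0 < cfQ D k ∧ cfP D k < √D := by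
  have hirr : Irrational √D := irrational_sqrt_natCast_iff.mpr hD
  induction k with
  | zero => exact ⟨one_pos, by simpa [cfP, cfPQ] using pos_of_not_isSquare hD⟩
  | succ k ih =>
    obtain ⟨hQ, hP⟩ := ih
    have hQ_real : (0 : ℝ) < cfQ D k := Int.cast_pos.mpr hQ
    have hsub : 0 < √D - cfP D (k + 1) :=
      fract_cfAlpha_mul_cfQ (cfAlpha_mul_cfQ hD k) ▸ mul_pos (fract_cfAlpha_pos hirr k) hQ_real
    have hadd : 0 < √D + cfP D (k + 1) := hQ_real.trans (cfQ_lt_sqrt_add_cfP_succ hD hQ hP)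
    have hmul : (0 : ℝ) < cfQ D (k + 1) * cfQ D k :=
      cfQ_succ_mul_eq_sqrt_sub_mul_sqrt_add k ▸ mul_pos hsub hadd
    exact ⟨Int.cast_pos.mp (pos_of_mul_pos_left hmul hQ_real.le), sub_pos.mp hsub⟩

lemma cfQ_pos (hD : ¬ IsSquare D) (k : ℕ) : 0 < cfQ D k :=
  (cfQ_pos_and_cfP_lt_sqrt hD k).1

lemma cfP_lt_sqrt (hD : ¬ IsSquare D) (k : ℕ) : cfP D k < √D :=
  (cfQ_pos_and_cfP_lt_sqrt hD k).2

lemma cfP_succ_mem_Ioc_cfQ (hD : ¬ IsSquare D) (k : ℕ) :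
    cfP D (k + 1) ∈ Set.Ioc (⌊√D⌋ - cfQ D k) ⌊√D⌋ := by
  have hQ : (0 : ℝ) < cfQ D k := Int.cast_pos.mpr (cfQ_pos hD k)
  have hlt : √D - cfP D (k + 1) < cfQ D k :=
    fract_cfAlpha_mul_cfQ (cfAlpha_mul_cfQ hD k) ▸ mul_lt_of_lt_one_left hQ (Int.fract_lt_one _)
  exact mem_Ioc_floor_sub (sub_lt_comm.mp hlt) (cfP_lt_sqrt hD _).le

lemma cfP_succ_mem_Ioc_cfQ_succ (hD : ¬ IsSquare D) (k : ℕ) :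
    cfP D (k + 1) ∈ Set.Ioc (⌊√D⌋ - cfQ D (k + 1)) ⌊√D⌋ := by
  have hQ : (0 : ℝ) < cfQ D k := Int.cast_pos.mpr (cfQ_pos hD k)
  have hP : cfP D (k + 1) < √D := cfP_lt_sqrt hD (k + 1)
  have hadd : cfQ D k < √D + cfP D (k + 1) :=
    cfQ_lt_sqrt_add_cfP_succ hD (cfQ_pos hD k) (cfP_lt_sqrt hD k)
  have hmul : (√D - cfP D (k + 1)) * cfQ D k < cfQ D (k + 1) * cfQ D k :=
    cfQ_succ_mul_eq_sqrt_sub_mul_sqrt_add k ▸ mul_lt_mul_of_pos_left hadd (sub_pos.mpr hP)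
  exact mem_Ioc_floor_sub (sub_lt_comm.mp (lt_of_mul_lt_mul_right hmul hQ.le)) hP.le

lemma cfPQ_reflect_step (hD : ¬ IsSquare D) {j k : ℕ} (hP : cfP D (j + 2) = cfP D (k + 1))
    (hQ : cfQ D (j + 2) = cfQ D k) :
    cfP D (j + 1) = cfP D (k + 2) ∧ cfQ D (j + 1) = cfQ D (k + 1) := by
  have hQ_eq : cfQ D (j + 1) = cfQ D (k + 1) := by
    refine mul_left_cancel₀ (cfQ_pos hD k).ne' ?_
    rw [← hQ, cfQ_succ_mul, hP, ← cfQ_succ_mul, hQ, mul_comm]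
  have hmod : cfP D (j + 1) ≡ cfP D (k + 2) [ZMOD cfQ D (k + 1)] := by
    have hj : cfQ D (k + 1) ∣ cfP D (k + 1) + cfP D (j + 1) :=
      hQ_eq ▸ hP ▸ cfQ_dvd_cfP_succ_add (j + 1)
    have hk : cfQ D (k + 1) ∣ cfP D (k + 2) + cfP D (k + 1) := cfQ_dvd_cfP_succ_add (k + 1)
    rw [Int.modEq_iff_dvd]
    simpa only [add_comm (cfP D (k + 2)), add_sub_add_left_eq_sub] using dvd_sub hk hj
  exact ⟨eq_of_modEq_of_mem_Ioc (hQ_eq ▸ cfP_succ_mem_Ioc_cfQ_succ hD j)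
    (cfP_succ_mem_Ioc_cfQ hD (k + 1)) hmod, hQ_eq⟩

theorem cfPQ_palindrome (hD : ¬ IsSquare D) {j k : ℕ} (h : cfQ D (j + k + 1) = 1) :
    cfP D (j + 1) = cfP D (k + 1) ∧ cfQ D (j + 1) = cfQ D k := by
  induction k generalizing j with
  | zero =>
    have hmem : cfP D (j + 1) ∈ Set.Ioc (⌊√D⌋ - 1) ⌊√D⌋ := h ▸ cfP_succ_mem_Ioc_cfQ_succ hD j
    exact ⟨eq_of_modEq_of_mem_Ioc hmem (cfP_succ_mem_Ioc_cfQ hD 0) Int.modEq_one, h⟩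
  | succ k ih =>
    obtain ⟨hP, hQ⟩ := ih (j := j + 1) (by rwa [add_right_comm j 1 k])
    exact cfPQ_reflect_step hD hP hQ

lemma cfA_mul_cfQ_eq_two_mul_cfP (hD : ¬ IsSquare D) {L : ℕ} (hL : 0 < L) (h : cfQ D (2 * L) = 1) :
    cfA √D L * cfQ D L = 2 * cfP D L := by
  obtain ⟨j, rfl⟩ := Nat.exists_eq_add_one_of_ne_zero hL.ne'
  have hP : cfP D (j + 1) = cfP D (j + 2) :=
    (cfPQ_palindrome hD (by rwa [add_right_comm, ← two_mul])).1
  rw [← cfP_succ_add, ← hP, two_mul]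

end Sqrt

lemma dvd_two_mul_gcd {m q d : ℤ} (hm : q ∣ 2 * m) (hd : q ∣ d - m ^ 2) :
    q ∣ 2 * (m.gcd d : ℤ) := by
  have h2d : q ∣ 2 * d := by
    have hsum : 2 * d = 2 * (d - m ^ 2) + m * (2 * m) := by ring
    exact hsum ▸ dvd_add (hd.mul_left 2) (hm.mul_left m)
  simpa [Int.gcd_mul_left] using Int.dvd_coe_gcd hm h2d

lemma gcd_dvd_two_of_dvd_two_mul_prime {p d m : ℕ} (hp : p.Prime) (hd : d ∣ 2 * p) (hm : 0 < m)
    (hlt : m ^ 2 < d) : m.gcd d ∣ 2 := by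
  have hpm : ¬ p ∣ m := fun h ↦ by
    have hle : p ≤ m := Nat.le_of_dvd hm h
    have hd_le : d ≤ 2 * p := Nat.le_of_dvd (by linarith [hp.pos]) hd
    nlinarith [hp.two_le]
  have hcop : (m.gcd d).Coprime p :=
    ((hp.coprime_iff_not_dvd.mpr hpm).symm).coprime_dvd_left (Nat.gcd_dvd_left m d)
  exact hcop.dvd_of_dvd_mul_right ((Nat.gcd_dvd_right m d).trans hd)

lemma not_four_dvd_of_dvd_two_mul_prime {p d : ℕ} (hp : p.Prime) (hd : d ∣ 2 * p)
    (hsq : ¬ IsSquare d) : ¬ 4 ∣ d := fun h4 ↦ by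
  have h2p : 2 ∣ p := Nat.dvd_of_mul_dvd_mul_left two_pos (h4.trans hd)
  obtain rfl : 2 = p := (Nat.prime_dvd_prime_iff_eq Nat.prime_two hp).mp h2p
  exact hsq ⟨2, Nat.dvd_antisymm hd h4⟩

lemma eq_two_of_dvd_two_mul_of_dvd_sub_sq {p d : ℕ} (hp : p.Prime) (hd : d ∣ 2 * p)
    (hsq : ¬ IsSquare d) {m q : ℤ} (hm : 0 < m) (hlt : m ^ 2 < d) (hq : 1 < q)
    (hqm : q ∣ 2 * m) (hqd : q ∣ d - m ^ 2) : q = 2 := by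
  lift m to ℕ using hm.le
  have hgcd : m.gcd d ∣ 2 :=
    gcd_dvd_two_of_dvd_two_mul_prime hp hd (by exact_mod_cast hm) (by exact_mod_cast hlt)
  have hq4 : q ∣ 4 :=
    (dvd_two_mul_gcd hqm hqd).trans (mul_dvd_mul_left 2 (Int.natCast_dvd_natCast.mpr hgcd))
  have hne4 : q ≠ 4 := by
    rintro rfl
    obtain ⟨n, hn⟩ : (2 : ℤ) ∣ m := by omega
    have h4d : (4 : ℤ) ∣ d := by
      have h4sq : (4 : ℤ) ∣ (m : ℤ) ^ 2 := ⟨n ^ 2, by rw [hn]; ring⟩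
      simpa using dvd_add hqd h4sq
    exact not_four_dvd_of_dvd_two_mul_prime hp hd hsq (by exact_mod_cast h4d)
  have hq_le : q ≤ 4 := Int.le_of_dvd four_pos hq4
  interval_cases q <;> omega

lemma modEq_two_of_two_dvd_sub_sq {m d : ℤ} (h : 2 ∣ d - m ^ 2) : m ≡ d [ZMOD 2] := by
  have hm : (2 : ℤ) ∣ m * (m - 1) := (Int.even_mul_pred_self m).two_dvd
  rw [Int.modEq_iff_dvd]
  exact (by ring : d - m ^ 2 + m * (m - 1) = d - m) ▸ dvd_add h hm

theorem stmt_7 (p D : ℕ) (hp : p.Prime) (hD : D = p ∨ D = 2 * p)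
    (hns : ¬ IsSquare D) (L : ℕ) (hL : 0 < L)
    (hT : cfPeriod (Real.sqrt D) = 2 * L) :
    (cfPQ D L).2 = 2 ∧ (cfPQ D L).1 = cfA (Real.sqrt D) L ∧
      (cfA (Real.sqrt D) L = ⌊Real.sqrt D⌋ - 1 ∨ cfA (Real.sqrt D) L = ⌊Real.sqrt D⌋) ∧
      cfA (Real.sqrt D) L ≡ (D : ℤ) [ZMOD 2] := by
  have hend : cfQ D (2 * L) = 1 := hT ▸ cfQ_cfPeriod hns (by omega)
  have hne_one : cfQ D L ≠ 1 := cfQ_ne_one_of_lt_cfPeriod hns hL (by omega)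
  have hQ_pos : 0 < cfQ D L := cfQ_pos hns L
  have hmid : cfA √D L * cfQ D L = 2 * cfP D L := cfA_mul_cfQ_eq_two_mul_cfP hns hL hend
  have hP_pos : 0 < cfP D L := by
    have := mul_pos (one_le_cfA_sqrt hns L) hQ_pos
    omega
  have hP_sq : cfP D L ^ 2 < (D : ℤ) := by
    exact_mod_cast (Real.lt_sqrt (by exact_mod_cast hP_pos.le)).mp (cfP_lt_sqrt hns L)
  have hQ : cfQ D L = 2 :=
    eq_two_of_dvd_two_mul_of_dvd_sub_sq hp (by rcases hD with rfl | rfl <;> simp) hns hP_pos hP_sq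
      (by omega) (Dvd.intro_left _ hmid) (cfQ_dvd_sub_cfP_sq L)
  have hP : cfP D L = cfA √D L := by linarith [hQ ▸ hmid]
  obtain ⟨j, rfl⟩ := Nat.exists_eq_add_one_of_ne_zero hL.ne'
  obtain ⟨hlower, hupper⟩ := cfP_succ_mem_Ioc_cfQ_succ hns j
  refine ⟨hQ, hP, by omega, modEq_two_of_two_dvd_sub_sq ?_⟩
  exact hQ ▸ hP ▸ cfQ_dvd_sub_cfP_sq (j + 1)
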